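/- arXiv:0902.3953 — 2 statements merged into one kernel-verified Lean document; each statement's English description precedes it below -/
import Mathlib

section
/- Let q ≥ 3, let x ∈ ℝ have an infinite regular λ_q-CF [a_0; a_1, a_2, …], and let g ∈ G_q with lower row (c, d) satisfy c·x + d ≠ 0. Then there exist b_0 ∈ ℤ and nonzero integers b_1, b_2, … such that the λ_q-continued fraction [b_0; b_1, b_2, …] converges to g·x, the sequence (b_i)_{i≥1} contains no block of h_q+1 consecutive entries equal to 1 and no block of h_q+1 consecutive entries equal to −1, and (b_i)_{i≥1} has a common tail with (a_i)_{i≥1}. -/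
open Filter Topology

/-- `λ_q = 2 cos (π/q)`. -/
noncomputable def lamq (q : ℕ) : ℝ := 2 * Real.cos (Real.pi / q)

/-- `h_q = (q-2)/2` for even `q` and `(q-3)/2` for odd `q`. -/
def hQ (q : ℕ) : ℕ := if Even q then (q - 2) / 2 else (q - 3) / 2

/-- Forbidden blocks for the nearest `λ_q`-multiple continued fractions.
For `ε ∈ {1,-1}`: the block `(ε)^{h_q+1}`; for even `q` the blocks `((ε)^{h_q}, ε·m)`, `m ≥ 1`;
for odd `q` (including `q = 3`, where `h_q = 0`) the blocks `((ε)^{h_q}, ε·2, (ε)^{h_q}, ε·m)`,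
`m ≥ 1`. -/
def IsForbidden (q : ℕ) (L : List ℤ) : Prop :=
  ∃ ε : ℤ, (ε = 1 ∨ ε = -1) ∧
    (L = List.replicate (hQ q + 1) ε ∨
      (if Even q then
        ∃ m : ℤ, 1 ≤ m ∧ L = List.replicate (hQ q) ε ++ [ε * m]
      else
        ∃ m : ℤ, 1 ≤ m ∧
          L = List.replicate (hQ q) ε ++ ε * 2 :: (List.replicate (hQ q) ε ++ [ε * m])))

/-- An infinite sequence is `q`-regular if no finite subblock is forbidden. -/
def RegularSeq (q : ℕ) (a : ℕ → ℤ) : Prop :=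
  ∀ (l len : ℕ), ¬ IsForbidden q (List.ofFn fun j : Fin len => a (l + (j : ℕ)))

/-- An infinite sequence is dual `q`-regular if no reversed finite subblock is forbidden. -/
def DualRegularSeq (q : ℕ) (a : ℕ → ℤ) : Prop :=
  ∀ (l len : ℕ), ¬ IsForbidden q (List.ofFn fun j : Fin len => a (l + (j : ℕ))).reverse

/-- A finite sequence is `q`-regular if no contiguous subblock is forbidden. -/
def RegularList (q : ℕ) (L : List ℤ) : Prop :=
  ∀ B : List ℤ, B <:+: L → ¬ IsForbidden q B

/-- Numerators of the convergents: `p₀ = a₀λ`, `p₁ = a₁λ·p₀ - 1`,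
`pₙ = aₙλ·pₙ₋₁ - pₙ₋₂` (so that `p₋₁ = 1`, `p₋₂ = 0`).  Here `A n` is the digit `aₙ`. -/
noncomputable def cfP (lam : ℝ) (A : ℕ → ℤ) : ℕ → ℝ
  | 0 => (A 0 : ℝ) * lam
  | 1 => (A 1 : ℝ) * lam * ((A 0 : ℝ) * lam) - 1
  | (n + 2) => (A (n + 2) : ℝ) * lam * cfP lam A (n + 1) - cfP lam A n

/-- Denominators of the convergents: `q₀ = 1`, `q₁ = a₁λ`,
`qₙ = aₙλ·qₙ₋₁ - qₙ₋₂` (so that `q₋₁ = 0`, `q₋₂ = -1`). -/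
noncomputable def cfQ (lam : ℝ) (A : ℕ → ℤ) : ℕ → ℝ
  | 0 => 1
  | 1 => (A 1 : ℝ) * lam
  | (n + 2) => (A (n + 2) : ℝ) * lam * cfQ lam A (n + 1) - cfQ lam A n

/-- The λ-continued fraction with digit sequence `A` converges to `x`. -/
def CFConvergesTo (lam : ℝ) (A : ℕ → ℤ) (x : ℝ) : Prop :=
  (∀ n, cfQ lam A n ≠ 0) ∧
    Filter.Tendsto (fun n => cfP lam A n / cfQ lam A n) Filter.atTop (nhds x)

/-- The value `p_L/q_L` of the finite continued fraction `[a₀; a₁, …, a_L]`. -/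
noncomputable def cfValList (lam : ℝ) (a0 : ℤ) (L : List ℤ) : ℝ :=
  cfP lam (fun i => (a0 :: L).getD i 0) L.length /
    cfQ lam (fun i => (a0 :: L).getD i 0) L.length

/-- The last denominator `q_L` of the finite continued fraction `[a₀; a₁, …, a_L]`. -/
noncomputable def cfDenList (lam : ℝ) (a0 : ℤ) (L : List ℤ) : ℝ :=
  cfQ lam (fun i => (a0 :: L).getD i 0) L.length

/-- The modified floor: `⌊t⌋* = ⌈t⌉ - 1` for `t > 0` and `⌊t⌋* = ⌊t⌋` for `t ≤ 0`. -/
noncomputable def floorstar (t : ℝ) : ℤ := if 0 < t then ⌈t⌉ - 1 else ⌊t⌋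

/-- The nearest `λ`-multiple: `⟨y⟩ = ⌊y/λ + 1/2⌋*`. -/
noncomputable def nearestLam (lam : ℝ) (x : ℝ) : ℤ := floorstar (x / lam + 1 / 2)

/-- The interval map `f_q` on `I_q = [-λ/2, λ/2]`. -/
noncomputable def fq (lam : ℝ) (x : ℝ) : ℝ :=
  if x = 0 then 0 else -1 / x - (nearestLam lam (-1 / x) : ℝ) * lam

/-- `R_q`: equal to `1` for even `q`, and the positive root of `R² + (2-λ_q)R = 1` for odd `q`. -/
noncomputable def Rq (q : ℕ) : ℝ :=
  if Even q then 1 else (lamq q - 2 + Real.sqrt ((2 - lamq q) ^ 2 + 4)) / 2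

/-- `r_q = R_q - λ_q`. -/
noncomputable def rq (q : ℕ) : ℝ := Rq q - lamq q

/-- The map `⟨·⟩*` used by the dual algorithm. -/
noncomputable def nearestDual (lam R y : ℝ) : ℤ :=
  if 0 ≤ y then floorstar (y / lam + 1 - R / lam) else floorstar (y / lam + R / lam)

/-- The dual interval map `f_q^*` on `I_{R_q} = [-R_q, R_q]`. -/
noncomputable def fqstar (lam R : ℝ) (x : ℝ) : ℝ :=
  if x = 0 then 0 else -1 / x - (nearestDual lam R (-1 / x) : ℝ) * lam

/-- The matrix `S = [[0,-1],[1,0]]` as an element of `SL(2,ℝ)`. -/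
noncomputable def matS : Matrix.SpecialLinearGroup (Fin 2) ℝ :=
  ⟨!![0, -1; 1, 0], by norm_num [Matrix.det_fin_two_of]⟩

/-- The matrix `T = [[1,λ],[0,1]]` as an element of `SL(2,ℝ)`. -/
noncomputable def matT (lam : ℝ) : Matrix.SpecialLinearGroup (Fin 2) ℝ :=
  ⟨!![1, lam; 0, 1], by norm_num [Matrix.det_fin_two_of]⟩

/-- The Hecke triangle group `G_q`, the subgroup of `SL(2,ℝ)` generated by `S` and `T_q`. -/
noncomputable def Hecke (q : ℕ) : Subgroup (Matrix.SpecialLinearGroup (Fin 2) ℝ) :=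
  Subgroup.closure {matS, matT (lamq q)}

/-- The Möbius action of `g` on `x ∈ ℝ`. -/
noncomputable def moeb (g : Matrix.SpecialLinearGroup (Fin 2) ℝ) (x : ℝ) : ℝ :=
  (g.val 0 0 * x + g.val 0 1) / (g.val 1 0 * x + g.val 1 1)

/-- `x` and `y` are `G_q`-equivalent. -/
def GqEquiv (q : ℕ) (x y : ℝ) : Prop :=
  ∃ g ∈ Hecke q, (g.val 1 0 * x + g.val 1 1 ≠ 0) ∧ moeb g x = y

/-- Two sequences have a common tail. -/
def CommonTail (a b : ℕ → ℤ) : Prop := ∃ m n : ℕ, ∀ k : ℕ, a (m + k) = b (n + k)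

/-- The period block of `ρ_q`: `(3)` for `q = 3`, `((1)^{h_q-1}, 2)` for even `q`
and `((1)^{h_q}, 2, (1)^{h_q-1}, 2)` for odd `q ≥ 5`. -/
def rhoBlock (q : ℕ) : List ℤ :=
  if q = 3 then [3]
  else if Even q then List.replicate (hQ q - 1) 1 ++ [2]
  else List.replicate (hQ q) 1 ++ 2 :: (List.replicate (hQ q - 1) 1 ++ [2])

/-- The periodic sequence `ρ_q`. -/
def rho (q : ℕ) (i : ℕ) : ℤ := (rhoBlock q).getD (i % (rhoBlock q).length) 0

/-- `x` has the infinite regular `λ_q`-CF with digit sequence `A` (with `A 0 = a₀`). -/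
def HasRegCF (q : ℕ) (x : ℝ) (A : ℕ → ℤ) : Prop :=
  (∀ i, A (i + 1) ≠ 0) ∧ RegularSeq q (fun i => A (i + 1)) ∧ CFConvergesTo (lamq q) A x

/-- `x` has the infinite dual regular `λ_q`-CF with digit sequence `A` (with `A 0 = a₀`). -/
def HasDualRegCF (q : ℕ) (x : ℝ) (A : ℕ → ℤ) : Prop :=
  (∀ i, A (i + 1) ≠ 0) ∧ DualRegularSeq q (fun i => A (i + 1)) ∧ CFConvergesTo (lamq q) A x

/-- The digits of `x` produced by the algorithm for `f_q`: `a_{i+1} = ⟨-1 / f_q^i(x)⟩`. -/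
noncomputable def digitSeq (lam : ℝ) (x : ℝ) : ℕ → ℤ :=
  fun i => nearestLam lam (-1 / (fq lam)^[i] x)

/-- The digits of `x` produced by the algorithm for `f_q^*`: `b_{i+1} = ⟨-1 / (f_q^*)^i(x)⟩*`. -/
noncomputable def digitSeqStar (lam R : ℝ) (x : ℝ) : ℕ → ℤ :=
  fun i => nearestDual lam R (-1 / (fqstar lam R)^[i] x)

/-!
The Möbius transformation `T ^ a₀ * S * ⋯ * T ^ aₙ * S` maps `∞` to the `n`-th convergent of
`[a₀; a₁, …]`. If replacing an initial segment of digits by another one multiplies the initial word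
by `g` on the left, then every later convergent is moved by `g`, and so is the limit. It therefore
suffices to rewrite words in a group with `S² = (TS) ^ q = 1`.

Acting by `T` only changes `a₀`, and acting by `S` puts a new digit `0` in front, which can violate
the condition on runs only if `a₀ = ε = ±1` completes a run of `h + 1` digits `ε`. Write
`q = h + k + 3`; then `(TS) ^ q = 1` gives the rewriting rule
`a, ε ^ (h + 1), c ↦ a - ε, (-ε) ^ k, c - ε`, where `k ≤ h`. It produces a new long run only if
`c = 2ε` and the digits after `c` again begin with `ε ^ h`, and then the rule is applied once more
there. The process can go on forever only if the digits end in the periodic stream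
`(ε ^ h, 2ε)^∞`, which regularity forbids.

The denominators of the new expansion do not vanish because `|qₙ₊₁ / qₙ|` is bounded below by
`sin ((j + 2)π / q) / sin ((j + 1)π / q) > 0`, where `j ≤ h` is the length of the run of equal signs
`±1` ending at the digit `aₙ₊₁`.
-/

section DigitWord

variable {G G' : Type*} [Group G] [Group G'] (S T : G)

/-- The product `T ^ a₁ * S * ⋯ * T ^ aₙ * S` attached to a list of digits. For the generators of
the Hecke group its columns are the last two convergents of the continued fraction. -/
def digitWord (L : List ℤ) : G := (L.map fun a ↦ T ^ a * S).prod

@[simp]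
lemma digitWord_nil : digitWord S T [] = 1 := rfl

@[simp]
lemma digitWord_cons (a : ℤ) (L : List ℤ) :
    digitWord S T (a :: L) = T ^ a * S * digitWord S T L := by
  simp [digitWord]

lemma digitWord_append (L L' : List ℤ) :
    digitWord S T (L ++ L') = digitWord S T L * digitWord S T L' := by
  simp [digitWord]

lemma digitWord_replicate (n : ℕ) (a : ℤ) :
    digitWord S T (List.replicate n a) = (T ^ a * S) ^ n := by
  simp [digitWord]

lemma digitWord_take_succ (s : Stream' ℤ) (n : ℕ) :
    digitWord S T (s.take (n + 1)) = digitWord S T (s.take n) * (T ^ s.get n * S) := by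
  rw [Stream'.take_succ', digitWord_append, digitWord_cons, digitWord_nil, mul_one]

lemma map_digitWord (φ : G →* G') (L : List ℤ) :
    φ (digitWord S T L) = digitWord (φ S) (φ T) L := by
  simp [digitWord, map_list_prod, Function.comp_def]

variable {S T}

lemma inv_mul_eq_conj (hS : S * S = 1) : T⁻¹ * S = S * (T * S)⁻¹ * S⁻¹ := by
  rw [mul_inv_rev, mul_inv_cancel_left, inv_eq_of_mul_eq_one_left hS]

lemma zpow_unit_mul_pow_eq_one {n : ℕ} (hS : S * S = 1) (hTS : (T * S) ^ n = 1) (ε : ℤˣ) :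
    (T ^ (ε : ℤ) * S) ^ n = 1 := by
  obtain rfl | rfl := Int.units_eq_one_or ε
  · simpa using hTS
  · rw [Units.val_neg, Units.val_one, zpow_neg_one, inv_mul_eq_conj hS, conj_pow, inv_pow, hTS,
      inv_one, mul_one, mul_inv_cancel]

lemma inv_mul_pow_mul_inv {h k : ℕ} (hS : S * S = 1) (hTS : (T * S) ^ (h + k + 3) = 1) :
    (T⁻¹ * S) ^ (k + 1) * T⁻¹ = S * (T * S) ^ (h + 1) := by
  have hpow : ((T * S) ^ (k + 2))⁻¹ = (T * S) ^ (h + 1) :=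
    inv_eq_of_mul_eq_one_left (by rw [← pow_add, ← hTS]; congr 1; ring)
  calc (T⁻¹ * S) ^ (k + 1) * T⁻¹ = (T⁻¹ * S) ^ (k + 2) * S := by
        rw [pow_succ _ (k + 1), mul_assoc _ _ S, mul_assoc T⁻¹, hS, mul_one]
    _ = S * (T * S) ^ (h + 1) * (S⁻¹ * S) := by
        rw [inv_mul_eq_conj hS, conj_pow, inv_pow, hpow, mul_assoc]
    _ = S * (T * S) ^ (h + 1) := by rw [inv_mul_cancel, mul_one]

lemma digitWord_flip_run {h k : ℕ} (hS : S * S = 1) (hTS : (T * S) ^ (h + k + 3) = 1)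
    (ε : ℤˣ) (a c : ℤ) :
    digitWord S T ((a - ε) :: (List.replicate k (-ε : ℤ) ++ [c - ε])) =
      digitWord S T (a :: (List.replicate (h + 1) (ε : ℤ) ++ [c])) := by
  have hrun := inv_mul_pow_mul_inv hS (zpow_unit_mul_pow_eq_one hS hTS ε)
  simp only [digitWord_cons, digitWord_append, digitWord_replicate, digitWord_nil, mul_one,
    zpow_neg]
  calc _ = T ^ a * (((T ^ (ε : ℤ))⁻¹ * S) ^ (k + 1) * (T ^ (ε : ℤ))⁻¹) * (T ^ c * S) := by
        rw [zpow_sub, sub_eq_neg_add c, zpow_add, zpow_neg, pow_succ']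
        simp only [mul_assoc]
    _ = _ := by
        rw [hrun]
        simp only [mul_assoc]

end DigitWord

section TailRel

open scoped Stream'

variable {G : Type*} [Group G] (S T : G)

/-- The digit streams `u` and `v` have a common tail, and along it the digit words of `u` are `g`
times those of `v`; formally, the value of `u` is the image under `g` of the value of `v`. -/
def TailRel (g : G) (u v : Stream' ℤ) : Prop :=
  ∃ m n, ∀ k, u.get (m + k) = v.get (n + k) ∧
    digitWord S T (u.take (m + k)) = g * digitWord S T (v.take (n + k))

namespace TailRel

variable {S T} {g g' : G} {u v w : Stream' ℤ}

variable (S T) in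
lemma refl (u : Stream' ℤ) : TailRel S T 1 u u := ⟨0, 0, fun k ↦ by simp⟩

lemma symm (huv : TailRel S T g u v) : TailRel S T g⁻¹ v u := by
  obtain ⟨m, n, H⟩ := huv
  exact ⟨n, m, fun k ↦ ⟨(H k).1.symm, by rw [(H k).2, inv_mul_cancel_left]⟩⟩

lemma trans (huv : TailRel S T g u v) (hvw : TailRel S T g' v w) : TailRel S T (g * g') u w := by
  obtain ⟨m, n, H⟩ := huv
  obtain ⟨m', n', H'⟩ := hvw
  refine ⟨m + m', n' + n, fun k ↦ ?_⟩
  obtain ⟨hget, hword⟩ := H (m' + k)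
  obtain ⟨hget', hword'⟩ := H' (n + k)
  rw [Nat.add_left_comm n m' k] at hget hword
  rw [Nat.add_assoc, Nat.add_assoc, hget, hget', hword, hword', mul_assoc]
  exact ⟨rfl, rfl⟩

variable (S T)

lemma cons (a : ℤ) (v : Stream' ℤ) : TailRel S T (T ^ a * S) (a :: v) v :=
  ⟨1, 0, fun k ↦ by rw [add_comm 1 k]; simp⟩

lemma append (L : List ℤ) (v : Stream' ℤ) : TailRel S T (digitWord S T L) (L ++ₛ v) v := by
  induction L with
  | nil => exact refl S T v
  | cons a L ih => simpa [Stream'.cons_append_stream] using (cons S T a (L ++ₛ v)).trans ih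

lemma cons_add (e b : ℤ) (v : Stream' ℤ) : TailRel S T (T ^ e) ((b + e) :: v) (b :: v) := by
  have hrel := (cons S T (b + e) v).trans (cons S T b v).symm
  rwa [mul_inv_rev, mul_assoc, mul_inv_cancel_left, ← zpow_neg, ← zpow_add,
    add_right_comm, add_neg_cancel, zero_add] at hrel

variable {S T}

lemma append_congr (L : List ℤ) (huv : TailRel S T 1 u v) :
    TailRel S T 1 (L ++ₛ u) (L ++ₛ v) := by
  simpa using ((append S T L u).trans huv).trans (append S T L v).symm

lemma append_of_digitWord_eq {L L' : List ℤ} (hL : digitWord S T L = digitWord S T L')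
    (u : Stream' ℤ) : TailRel S T 1 (L ++ₛ u) (L' ++ₛ u) := by
  simpa [hL] using (append S T L u).trans (append S T L' u).symm

end TailRel

end TailRel

section IsAdmissible

open scoped Stream'

/-- The period `(ε ^ h, 2 ε)` of the digit streams that every application of the rewriting rule
`digitWord_flip_run` leaves non-admissible. -/
def exceptionalBlock (h : ℕ) (ε : ℤˣ) : List ℤ := List.replicate h (ε : ℤ) ++ [2 * (ε : ℤ)]

lemma exceptionalBlock_ne_nil (h : ℕ) (ε : ℤˣ) : exceptionalBlock h ε ≠ [] := by
  simp [exceptionalBlock]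

/-- The periodic stream with period `exceptionalBlock h ε`. -/
def exceptionalStream (h : ℕ) (ε : ℤˣ) : Stream' ℤ :=
  Stream'.cycle (exceptionalBlock h ε) (exceptionalBlock_ne_nil h ε)

lemma exceptionalStream_eq (h : ℕ) (ε : ℤˣ) :
    exceptionalStream h ε = exceptionalBlock h ε ++ₛ exceptionalStream h ε :=
  Stream'.cycle_eq _ _

/-- A stream of digits is admissible if its entries are nonzero, it contains no run of `h + 1`
equal signs `ε = ±1`, and no tail of it is `exceptionalStream h ε`. -/
structure IsAdmissible (h : ℕ) (s : Stream' ℤ) : Prop where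
  ne_zero : ∀ i, s.get i ≠ 0
  exists_ne : ∀ (ε : ℤˣ) l, ∃ j < h + 1, s.get (l + j) ≠ ε
  drop_ne : ∀ (ε : ℤˣ) l, s.drop l ≠ exceptionalStream h ε

namespace IsAdmissible

variable {h : ℕ} {s : Stream' ℤ}

lemma drop (hs : IsAdmissible h s) (n : ℕ) : IsAdmissible h (s.drop n) where
  ne_zero i := by simpa using hs.ne_zero (n + i)
  exists_ne ε l := by simpa [add_assoc] using hs.exists_ne ε (n + l)
  drop_ne ε l := by simpa using hs.drop_ne ε (n + l)

lemma exists_apply_ne {B : ℕ → ℤ} (hB : IsAdmissible h (Stream'.tail B)) (ε : ℤˣ) (l : ℕ) :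
    ∃ j < h + 1, B (l + 1 + j) ≠ ε := by
  simpa [Stream'.get, Stream'.tail, add_right_comm] using hB.exists_ne ε l

lemma drop_append_ne (hs : IsAdmissible h s) (L : List ℤ) (ε : ℤˣ) (l : ℕ) :
    (L ++ₛ s).drop l ≠ exceptionalStream h ε := by
  intro hl
  -- the exceptional stream is invariant under dropping a period, so `l` may be taken past `L`
  have hperiod : ∀ n, (L ++ₛ s).drop (l + n * (exceptionalBlock h ε).length) =
      exceptionalStream h ε := fun n ↦ by
    induction n with
    | zero => simpa using hl
    | succ n ih =>
      rw [Nat.succ_mul, ← add_assoc, ← Stream'.drop_drop, ih]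
      nth_rw 1 [exceptionalStream_eq]
      exact Stream'.drop_append_stream _ _
  have hle : L.length ≤ l + L.length * (exceptionalBlock h ε).length := by
    have := Nat.le_mul_of_pos_right L.length
      (List.length_pos_of_ne_nil (exceptionalBlock_ne_nil h ε))
    omega
  obtain ⟨j, hj⟩ := Nat.exists_eq_add_of_le hle
  apply hs.drop_ne ε j
  rw [← hperiod L.length, hj, ← Stream'.drop_drop, Stream'.drop_append_stream]

lemma cons (hs : IsAdmissible h s) {d : ℤ} (hd : d ≠ 0) (hunit : ¬ IsUnit d) :
    IsAdmissible h (d :: s) where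
  ne_zero
    | 0 => hd
    | i + 1 => hs.ne_zero i
  exists_ne ε
    | 0 => ⟨0, h.succ_pos, fun heq ↦ hunit ((show d = ε from heq) ▸ ε.isUnit)⟩
    | l + 1 => by simpa [add_right_comm l 1] using hs.exists_ne ε l
  drop_ne ε l := hs.drop_append_ne [d] ε l

lemma replicate_append (hs : IsAdmissible h s) {k : ℕ} (hk : k ≤ h) {ε : ℤˣ}
    (hhead : s.head ≠ ε) : IsAdmissible h (List.replicate k (ε : ℤ) ++ₛ s) := by
  have hlt : ∀ {i}, i < k → (List.replicate k (ε : ℤ) ++ₛ s).get i = ε := fun hi ↦ by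
    simp [Stream'.get_append_left, hi]
  have hadd : ∀ i, (List.replicate k (ε : ℤ) ++ₛ s).get (k + i) = s.get i := fun i ↦ by
    simpa using Stream'.get_append_right i (List.replicate k (ε : ℤ)) s
  refine ⟨fun i ↦ ?_, fun δ l ↦ ?_, hs.drop_append_ne _⟩
  · obtain hi | ⟨i, rfl⟩ := (lt_or_ge i k).imp_right Nat.exists_eq_add_of_le
    · rw [hlt hi]
      exact ε.ne_zero
    · rw [hadd]
      exact hs.ne_zero i
  · obtain hl | ⟨l, rfl⟩ := (lt_or_ge l k).imp_right Nat.exists_eq_add_of_le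
    · obtain rfl | hne := eq_or_ne δ ε
      · have hk0 := hadd 0
        rw [add_zero] at hk0
        exact ⟨k - l, by omega, by rwa [Nat.add_sub_cancel' hl.le, hk0]⟩
      · exact ⟨0, h.succ_pos, by rw [add_zero, hlt hl]; exact_mod_cast hne.symm⟩
    · obtain ⟨j, hj, hne⟩ := hs.exists_ne δ l
      exact ⟨j, hj, by rwa [add_assoc, hadd]⟩

lemma eq_replicate_append_of_not_cons (hs : IsAdmissible h s) {ε : ℤˣ}
    (hcons : ¬ IsAdmissible h ((ε : ℤ) :: s)) :
    ∃ (c : ℤ) (u : Stream' ℤ), c ≠ ε ∧ s = List.replicate h (ε : ℤ) ++ₛ (c :: u) := by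
  have hrun : ∀ j < h, s.get j = ε := by
    contrapose! hcons
    obtain ⟨j, hj, hne⟩ := hcons
    refine ⟨?_, fun δ l ↦ ?_, hs.drop_append_ne [(ε : ℤ)]⟩
    · rintro (_ | i)
      exacts [ε.ne_zero, hs.ne_zero i]
    · obtain _ | l := l
      · obtain rfl | hδ := eq_or_ne δ ε
        · exact ⟨j + 1, by omega, by simpa using hne⟩
        · exact ⟨0, h.succ_pos, Units.val_injective.ne hδ.symm⟩
      · simpa [add_right_comm l 1] using hs.exists_ne δ l
  refine ⟨s.get h, s.drop (h + 1), fun hh ↦ ?_, ?_⟩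
  · obtain ⟨j, hj, hne⟩ := hs.exists_ne ε 0
    rw [zero_add] at hne
    obtain hj | rfl := Nat.lt_succ_iff_lt_or_eq.mp hj
    exacts [hne (hrun j hj), hne hh]
  · have htake : s.take h = List.replicate h (ε : ℤ) :=
      List.ext_getElem (by simp) fun j hj _ ↦ by simpa using hrun j (by simpa using hj)
    conv_lhs => rw [← Stream'.append_take_drop h s, htake, ← Stream'.eta (s.drop h)]
    simp

end IsAdmissible

end IsAdmissible

section Normalization

open scoped Stream'

variable {G : Type*} [Group G] (S T : G)

/-- Whatever digit `a` is put in front of `v`, the stream `a :: v` is equivalent to some `a' :: t`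
with `t` admissible. The last clause is what lets the result be put behind a run of digits `-ε`:
either `a'` differs from `-ε` whenever `a = -ε`, or the run is not prolonged by `t`. -/
def IsNormalizable (h : ℕ) (ε : ℤˣ) (v : Stream' ℤ) : Prop :=
  ∀ a : ℤ, ∃ (a' : ℤ) (t : Stream' ℤ), IsAdmissible h t ∧ TailRel S T 1 (a' :: t) (a :: v) ∧
    (a' = a ∧ t.head ≠ -ε ∨ ε * a' < ε * a)

variable {S T} {h k : ℕ} {ε : ℤˣ}

lemma IsAdmissible.isNormalizable {t : Stream' ℤ} (ht : IsAdmissible h t)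
    (hhead : t.head ≠ -ε) : IsNormalizable S T h ε t :=
  fun a ↦ ⟨a, t, ht, .refl S T _, .inl ⟨rfl, hhead⟩⟩

lemma unit_mul_lt_of_eq_sub {a b : ℤ} (hb : b = a - ε ∨ ε * b < ε * (a - ε)) :
    ε * b < ε * a := by
  obtain rfl | rfl := Int.units_eq_one_or ε <;> simp at hb ⊢ <;> omega

lemma ne_zero_and_not_isUnit_of_mul_lt {b : ℤ} (hb : (ε : ℤ) * b < ε * (-ε)) :
    b ≠ 0 ∧ ¬ IsUnit b := by
  rw [Int.isUnit_iff]
  obtain rfl | rfl := Int.units_eq_one_or ε <;> simp at hb <;> omega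

lemma IsNormalizable.replicate_append (hS : S * S = 1) (hTS : (T * S) ^ (h + k + 3) = 1)
    (hkh : k ≤ h) {c : ℤ} {u : Stream' ℤ} (hu : IsNormalizable S T h ε ((c - ε) :: u)) :
    IsNormalizable S T h ε (List.replicate (h + 1) (ε : ℤ) ++ₛ (c :: u)) := by
  intro a
  have hrule := TailRel.append_of_digitWord_eq (digitWord_flip_run hS hTS ε a c) u
  simp only [Stream'.cons_append_stream, Stream'.append_append_stream,
    Stream'.nil_append_stream] at hrule
  obtain _ | k := k
  · obtain ⟨b, t, ht, hrel, hb⟩ := hu (a - ε)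
    exact ⟨b, t, ht, by simpa using hrel.trans hrule,
      .inr (unit_mul_lt_of_eq_sub (hb.imp_left And.left))⟩
  · obtain ⟨b, t, ht, hrel, hb⟩ := hu (-ε)
    refine ⟨a - ε, List.replicate k (-ε : ℤ) ++ₛ (b :: t), ?_, ?_,
      .inr (unit_mul_lt_of_eq_sub (.inl rfl))⟩
    · obtain ⟨rfl, hhead⟩ | hb := hb
      · have hadm := ht.replicate_append hkh (ε := -ε) (by simpa using hhead)
        simpa [List.replicate_succ', Stream'.cons_append_stream] using hadm
      · obtain ⟨hb0, hunit⟩ := ne_zero_and_not_isUnit_of_mul_lt hb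
        have hne : b ≠ (-ε : ℤˣ) := fun heq ↦ hunit (heq ▸ (-ε).isUnit)
        exact (ht.cons hb0 hunit).replicate_append (ε := -ε) (by omega) hne
    · have hcongr := hrel.append_congr ((a - ε) :: List.replicate k (-ε : ℤ))
      rw [List.replicate_succ'] at hrule
      simp only [Stream'.cons_append_stream, Stream'.append_append_stream,
        Stream'.nil_append_stream] at hcongr hrule
      simpa using hcongr.trans hrule

lemma IsAdmissible.isNormalizable_cons (hS : S * S = 1) (hTS : (T * S) ^ (h + k + 3) = 1)
    (hkh : k ≤ h) {s : Stream' ℤ} (hs : IsAdmissible h s) :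
    IsNormalizable S T h ε ((ε : ℤ) :: s) := by
  obtain ⟨i, hi⟩ : ∃ i, s.get i ≠ (exceptionalStream h ε).get i := by
    by_contra! heq
    exact hs.drop_ne ε 0 (Stream'.ext heq)
  induction i using Nat.strong_induction_on generalizing s with
  | _ i ih =>
  by_cases hadm : IsAdmissible h ((ε : ℤ) :: s)
  · refine hadm.isNormalizable ?_
    obtain rfl | rfl := Int.units_eq_one_or ε <;> simp
  obtain ⟨c, u, hc, rfl⟩ := hs.eq_replicate_append_of_not_cons hadm
  have hcu : IsAdmissible h (c :: u) := by
    have hdrop := hs.drop (List.replicate h (ε : ℤ)).length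
    rwa [Stream'.drop_append_stream] at hdrop
  have hu : IsAdmissible h u := hcu.drop 1
  rw [← Stream'.cons_append_stream, ← List.replicate_succ]
  refine .replicate_append hS hTS hkh ?_
  obtain rfl | hc2 := eq_or_ne c (2 * ε)
  · rw [two_mul, add_sub_cancel_right]
    have hblock : List.replicate h (ε : ℤ) ++ₛ (2 * (ε : ℤ) :: u) = exceptionalBlock h ε ++ₛ u := by
      simp [exceptionalBlock, Stream'.append_append_stream]
    rw [hblock, exceptionalStream_eq] at hi
    obtain ⟨j, rfl⟩ : ∃ j, i = (exceptionalBlock h ε).length + j := by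
      refine Nat.exists_eq_add_of_le (not_lt.mp fun hlt ↦ hi ?_)
      rw [Stream'.get_append_left _ _ _ hlt, Stream'.get_append_left _ _ _ hlt]
    rw [Stream'.get_append_right, Stream'.get_append_right] at hi
    exact ih j (by simp [exceptionalBlock]) hu hi
  · have hc0 : c ≠ 0 := hcu.ne_zero 0
    refine (hu.cons (by omega) ?_).isNormalizable (by simpa using hc0)
    rw [Int.isUnit_iff]
    obtain rfl | rfl := Int.units_eq_one_or ε <;> simp at hc hc2 ⊢ <;> omega

end Normalization

section Orbit

open scoped Stream'

variable {G : Type*} [Group G] {S T : G} {h k : ℕ}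

lemma TailRel.exists_admissible_mul_left (hS : S * S = 1) (hTS : (T * S) ^ (h + k + 3) = 1)
    (hkh : k ≤ h) {g : G} {A s : Stream' ℤ} {b : ℤ} (hs : IsAdmissible h s)
    (hrel : TailRel S T g (b :: s) A) :
    ∃ (b' : ℤ) (s' : Stream' ℤ), IsAdmissible h s' ∧ TailRel S T (S * g) (b' :: s') A := by
  have hcons : TailRel S T (S * g) (0 :: b :: s) A := by
    simpa using (TailRel.cons S T 0 (b :: s)).trans hrel
  by_cases hunit : IsUnit b
  · obtain ⟨ε, rfl⟩ := hunit
    obtain ⟨b', s', hs', hrel', -⟩ := hs.isNormalizable_cons (ε := ε) hS hTS hkh 0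
    exact ⟨b', s', hs', by simpa using hrel'.trans hcons⟩
  obtain rfl | hb := eq_or_ne b 0
  · have hzeros : TailRel S T 1 s (0 :: 0 :: s) := by
      simpa [hS, Stream'.cons_append_stream] using (TailRel.append S T [0, 0] s).symm
    refine ⟨s.head, s.tail, hs.drop 1, ?_⟩
    rw [Stream'.eta]
    simpa using hzeros.trans hcons
  · exact ⟨0, b :: s, hs.cons hb hunit, hcons⟩

theorem exists_admissible_tailRel_of_mem_closure (hS : S * S = 1)
    (hTS : (T * S) ^ (h + k + 3) = 1) (hkh : k ≤ h) {A : Stream' ℤ} (hA : IsAdmissible h A.tail)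
    {g : G} (hg : g ∈ Subgroup.closure {S, T}) :
    ∃ (b : ℤ) (s : Stream' ℤ), IsAdmissible h s ∧ TailRel S T g (b :: s) A := by
  have hT : ∀ (e : ℤ) (g : G), (∃ b s, IsAdmissible h s ∧ TailRel S T g (b :: s) A) →
      ∃ b s, IsAdmissible h s ∧ TailRel S T (T ^ e * g) (b :: s) A := by
    rintro e g ⟨b, s, hs, hrel⟩
    exact ⟨b + e, s, hs, (TailRel.cons_add S T e b s).trans hrel⟩
  induction hg using Subgroup.closure_induction_left with
  | one => exact ⟨A.head, A.tail, hA, by simpa using TailRel.refl S T A⟩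
  | mul_left x hx g _ ih =>
    obtain rfl | rfl := hx
    · obtain ⟨b, s, hs, hrel⟩ := ih
      exact hrel.exists_admissible_mul_left hS hTS hkh hs
    · simpa using hT 1 g ih
  | inv_mul_cancel x hx g _ ih =>
    obtain rfl | rfl := hx
    · obtain ⟨b, s, hs, hrel⟩ := ih
      rw [inv_eq_of_mul_eq_one_left hS]
      exact hrel.exists_admissible_mul_left hS hTS hkh hs
    · simpa using hT (-1) g ih

end Orbit

section Mobius

open OnePoint Matrix SpecialLinearGroup

/-- The action of `SL(2, ℝ)` on the projective line `ℝ ∪ {∞}` by Möbius transformations. -/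
noncomputable def mobius : SpecialLinearGroup (Fin 2) ℝ →* Equiv.Perm (OnePoint ℝ) :=
  (MulAction.toPermHom (GL (Fin 2) ℝ) (OnePoint ℝ)).comp toGL

variable {g : SpecialLinearGroup (Fin 2) ℝ} {x y : ℝ}

lemma mobius_apply_infty (hg : g.val 1 0 ≠ 0) : mobius g ∞ = ↑(g.val 0 0 / g.val 1 0) :=
  (smul_infty_eq_ite _).trans (if_neg hg)

lemma mobius_apply_coe_eq_coe_iff :
    mobius g x = ↑y ↔ g.val 1 0 * x + g.val 1 1 ≠ 0 ∧ moeb g x = y := by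
  have happly : mobius g x = if g.val 1 0 * x + g.val 1 1 = 0 then ∞ else ↑(moeb g x) :=
    smul_some_eq_ite
  rw [happly]
  split_ifs with hden <;> simp [hden]

lemma mobius_neg_one : mobius (-1) = 1 := by
  ext p
  induction p using OnePoint.rec with
  | infty => exact (smul_infty_eq_ite _).trans (by simp)
  | coe x => exact mobius_apply_coe_eq_coe_iff.mpr (by simp [moeb])

lemma continuousAt_moeb (hden : g.val 1 0 * x + g.val 1 1 ≠ 0) : ContinuousAt (moeb g) x := by
  unfold moeb
  fun_prop (disch := exact hden)

end Mobius

section Generators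

open Matrix Real

lemma coe_matS : matS.val = !![0, -1; 1, 0] := rfl

lemma coe_matT (t : ℝ) : (matT t).val = !![1, t; 0, 1] := rfl

lemma matS_mul_matS : matS * matS = -1 := by
  ext i j
  fin_cases i <;> fin_cases j <;> simp [coe_matS]

lemma matT_add (s t : ℝ) : matT (s + t) = matT s * matT t := by
  ext i j
  fin_cases i <;> fin_cases j <;> simp [coe_matT, add_comm]

lemma matT_zpow (t : ℝ) (n : ℤ) : matT t ^ n = matT (n * t) := by
  let φ : Multiplicative ℝ →* SpecialLinearGroup (Fin 2) ℝ :=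
    MonoidHom.mk' (fun s ↦ matT s.toAdd) fun s t ↦ matT_add s.toAdd t.toAdd
  simpa [φ] using (map_zpow φ (Multiplicative.ofAdd t) n).symm

lemma sin_smul_pow_succ {R : Type*} [Ring R] [Algebra ℝ R] {M : R} {θ : ℝ}
    (hM : M * M = (2 * cos θ) • M - 1) (n : ℕ) :
    sin θ • M ^ (n + 1) = sin ((n + 1) * θ) • M - sin (n * θ) • 1 := by
  induction n with
  | zero => simp
  | succ n ih =>
    have hsin : sin ((n + 1 + 1) * θ) = 2 * cos θ * sin ((n + 1) * θ) - sin (n * θ) := by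
      rw [show (n : ℝ) * θ = (n + 1) * θ - θ by ring, add_one_mul (n + 1 : ℝ), sin_add, sin_sub]
      ring
    rw [pow_succ, ← smul_mul_assoc, ih, sub_mul, smul_mul_assoc, hM, Nat.cast_succ, hsin]
    simp only [smul_mul_assoc, one_mul]
    module

lemma matT_mul_matS_pow {q : ℕ} (hq : 2 ≤ q) : (matT (lamq q) * matS) ^ q = -1 := by
  obtain ⟨n, rfl⟩ : ∃ n, q = n + 1 := ⟨q - 1, by omega⟩
  set θ : ℝ := π / (n + 1 : ℕ) with hθ
  have hnθ : (n + 1) * θ = π := by rw [hθ]; push_cast; field_simp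
  have hsin : sin θ ≠ 0 := by
    refine (sin_pos_of_pos_of_lt_pi (by positivity) (div_lt_self pi_pos ?_)).ne'
    exact_mod_cast hq
  have hcoe : (matT (lamq (n + 1)) * matS).val = !![2 * cos θ, -1; 1, 0] := by
    simp [coe_matT, coe_matS, lamq, hθ]
  have hsq : !![2 * cos θ, -1; 1, 0] * !![2 * cos θ, -1; 1, 0] =
      (2 * cos θ) • !![2 * cos θ, -1; 1, 0] - 1 := by
    ext i j
    fin_cases i <;> fin_cases j <;> simp [sub_eq_add_neg]
  have hpow := sin_smul_pow_succ hsq n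
  rw [hnθ, sin_pi, show n * θ = π - θ by linarith, sin_pi_sub, zero_smul, zero_sub,
    ← smul_neg] at hpow
  have hval : ((matT (lamq (n + 1)) * matS) ^ (n + 1)).val = -1 := by
    rw [Matrix.SpecialLinearGroup.coe_pow, hcoe]
    exact smul_right_injective _ hsin hpow
  exact Subtype.ext hval

lemma mobius_matS_mul_self : mobius matS * mobius matS = 1 := by
  rw [← map_mul, matS_mul_matS, mobius_neg_one]

lemma mobius_matT_mul_matS_pow {q : ℕ} (hq : 2 ≤ q) :
    (mobius (matT (lamq q)) * mobius matS) ^ q = 1 := by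
  rw [← map_mul, ← map_pow, matT_mul_matS_pow hq, mobius_neg_one]

lemma mobius_mem_closure {q : ℕ} {g : SpecialLinearGroup (Fin 2) ℝ} (hg : g ∈ Hecke q) :
    mobius g ∈ Subgroup.closure {mobius matS, mobius (matT (lamq q))} := by
  rw [← Set.image_pair, ← MonoidHom.map_closure]
  exact Subgroup.mem_map_of_mem mobius hg

end Generators

section Convergents

open Matrix OnePoint

lemma digitWord_take_eq_convergents (lam : ℝ) (B : Stream' ℤ) (n : ℕ) :
    (digitWord matS (matT lam) (B.take (n + 2))).val =
      !![cfP lam B (n + 1), -cfP lam B n; cfQ lam B (n + 1), -cfQ lam B n] := by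
  have hdigit (i : ℕ) : (matT lam ^ B.get i * matS).val = !![B i * lam, -1; 1, 0] := by
    rw [matT_zpow]
    simp [coe_matT, coe_matS, Stream'.get]
  induction n with
  | zero =>
    rw [digitWord_take_succ, digitWord_take_succ, Stream'.take_zero, digitWord_nil, one_mul,
      Matrix.SpecialLinearGroup.coe_mul, hdigit, hdigit]
    simp [cfP, cfQ, sub_eq_add_neg, mul_comm]
  | succ n ih =>
    rw [digitWord_take_succ, Matrix.SpecialLinearGroup.coe_mul, ih, hdigit]
    simp [cfP, cfQ, sub_eq_add_neg, mul_comm]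

variable {lam x : ℝ} {A B : Stream' ℤ} {g : SpecialLinearGroup (Fin 2) ℝ}

lemma digitWord_mobius_infty {n : ℕ} (hn : cfQ lam B (n + 1) ≠ 0) :
    digitWord (mobius matS) (mobius (matT lam)) (B.take (n + 2)) ∞ =
      ↑(cfP lam B (n + 1) / cfQ lam B (n + 1)) := by
  have hword := digitWord_take_eq_convergents lam B n
  rw [← map_digitWord, mobius_apply_infty (by simp [hword, hn]), hword]
  simp

lemma CFConvergesTo.of_tailRel (hA : CFConvergesTo lam A x) (hB : ∀ n, cfQ lam B n ≠ 0)
    (hden : g.val 1 0 * x + g.val 1 1 ≠ 0)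
    (hrel : TailRel (mobius matS) (mobius (matT lam)) (mobius g) B A) :
    CFConvergesTo lam B (moeb g x) := by
  obtain ⟨m, n, H⟩ := hrel
  have hconv (k : ℕ) : moeb g (cfP lam A (k + (n + 1)) / cfQ lam A (k + (n + 1))) =
      cfP lam B (k + (m + 1)) / cfQ lam B (k + (m + 1)) := by
    have hword := DFunLike.congr_fun (H (k + 2)).2 ∞
    rw [← add_assoc m, ← add_assoc n, Equiv.Perm.mul_apply, digitWord_mobius_infty (hB _),
      digitWord_mobius_infty (hA.1 _)] at hword
    rw [← add_assoc k n, ← add_assoc k m, add_comm k n, add_comm k m]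
    exact (mobius_apply_coe_eq_coe_iff.mp hword.symm).2
  refine ⟨hB, (Filter.tendsto_add_atTop_iff_nat (m + 1)).mp ?_⟩
  simp only [← hconv]
  exact (continuousAt_moeb hden).tendsto.comp ((Filter.tendsto_add_atTop_iff_nat (n + 1)).mpr hA.2)

end Convergents

section Denominators

open Real

/-- The ratio `sin ((j + 2) π / q) / sin ((j + 1) π / q)`. It is the ratio of two consecutive
denominators after a run of `j + 1` initial digits `1`, and a lower bound for such ratios, up to
sign, after any digits ending in a run of `j` equal digits `±1`. -/
noncomputable def sinRatio (q j : ℕ) : ℝ := sin ((j + 2) * (π / q)) / sin ((j + 1) * (π / q))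

variable {q h j : ℕ}

lemma sin_succ_mul_pi_div_pos (hj : j + 1 < q) : 0 < sin ((j + 1) * (π / q)) := by
  have hq : (0 : ℝ) < q := by exact_mod_cast (Nat.zero_le _).trans_lt hj
  have hjq : (j + 1 : ℝ) < q := by exact_mod_cast hj
  refine sin_pos_of_pos_of_lt_pi (by positivity) ?_
  rw [← mul_div_assoc, div_lt_iff₀ hq, mul_comm]
  gcongr

lemma sinRatio_zero (hq : 2 ≤ q) : sinRatio q 0 = lamq q := by
  have hpos := sin_succ_mul_pi_div_pos (j := 0) hq
  simp only [Nat.cast_zero, zero_add, one_mul] at hpos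
  simp only [sinRatio, lamq, Nat.cast_zero, zero_add, one_mul, sin_two_mul]
  field_simp

lemma sinRatio_pos (hj : j + 2 < q) : 0 < sinRatio q j := by
  have hpos := sin_succ_mul_pi_div_pos (j := j + 1) hj
  rw [Nat.cast_succ, add_assoc, one_add_one_eq_two] at hpos
  exact div_pos hpos (sin_succ_mul_pi_div_pos (by omega))

lemma sinRatio_succ (hj : j + 2 < q) : sinRatio q (j + 1) = lamq q - 1 / sinRatio q j := by
  have hpos := sin_succ_mul_pi_div_pos (j := j + 1) hj
  set θ := π / q with hθ
  have hsum : sin ((j + 1 + 2) * θ) = 2 * cos θ * sin ((j + 1 + 1) * θ) - sin ((j + 1) * θ) := by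
    rw [show (j + 1 + 2) * θ = (j + 1 + 1) * θ + θ by ring,
      show (j + 1) * θ = (j + 1 + 1) * θ - θ by ring, sin_add, sin_sub]
    ring
  rw [Nat.cast_succ] at hpos
  rw [sinRatio, sinRatio, one_div_div, Nat.cast_succ, ← hθ, hsum, sub_div,
    mul_div_cancel_right₀ _ hpos.ne', lamq, add_assoc (j : ℝ) 1 1, one_add_one_eq_two]

lemma one_div_sinRatio_le (hj : j + 3 ≤ q) : 1 / sinRatio q j ≤ lamq q := by
  have hq : (0 : ℝ) < q := by exact_mod_cast Nat.zero_lt_of_lt (Nat.lt_of_succ_le hj)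
  have hjq : ((j + 1 : ℕ) + 2 : ℝ) ≤ q := by exact_mod_cast hj
  rw [← sub_nonneg, ← sinRatio_succ hj]
  refine div_nonneg (sin_nonneg_of_nonneg_of_le_pi (by positivity) ?_)
    (sin_succ_mul_pi_div_pos hj).le
  rw [← mul_div_assoc, div_le_iff₀ hq, mul_comm]
  gcongr

lemma sinRatio_succ_le_or_lamq_le (hj : j + 3 ≤ q) {ε : ℤˣ} {r : ℝ}
    (hr : sinRatio q j ≤ (ε : ℤ) * r) {b : ℤ} (hb : b ≠ 0) :
    b = ε ∧ sinRatio q (j + 1) ≤ (ε : ℤ) * (b * lamq q - 1 / r) ∨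
      ∃ δ : ℤˣ, lamq q ≤ (δ : ℤ) * (b * lamq q - 1 / r) := by
  have hinv : 1 / ((ε : ℤ) * r) ≤ 1 / sinRatio q j := one_div_le_one_div_of_le (sinRatio_pos hj) hr
  have hinv_pos : 0 < 1 / ((ε : ℤ) * r) := one_div_pos.mpr ((sinRatio_pos hj).trans_le hr)
  have hle := hinv.trans (one_div_sinRatio_le hj)
  have hlam := hinv_pos.trans_le hle
  have hsplit : ((ε : ℤ) : ℝ) * (b * lamq q - 1 / r) =
      (ε * b : ℤ) * lamq q - 1 / ((ε : ℤ) * r) := by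
    obtain rfl | rfl := Int.units_eq_one_or ε
    · simp
    · simp
      ring
  have hεb : (ε : ℤ) * b ≤ -1 ∨ b = ε ∨ 2 ≤ (ε : ℤ) * b := by
    obtain rfl | rfl := Int.units_eq_one_or ε <;> simp <;> omega
  obtain hneg | rfl | htwo := hεb
  · refine .inr ⟨-ε, ?_⟩
    have hmul : ((ε * b : ℤ) : ℝ) * lamq q ≤ -1 * lamq q :=
      mul_le_mul_of_nonneg_right (by exact_mod_cast hneg) hlam.le
    rw [Units.val_neg, Int.cast_neg, neg_mul, hsplit]
    linarith
  · refine .inl ⟨rfl, ?_⟩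
    rw [hsplit, ← Units.val_mul, Int.units_mul_self, Units.val_one, Int.cast_one, one_mul,
      sinRatio_succ hj]
    linarith
  · refine .inr ⟨ε, ?_⟩
    have hmul : 2 * lamq q ≤ ((ε * b : ℤ) : ℝ) * lamq q :=
      mul_le_mul_of_nonneg_right (by exact_mod_cast htwo) hlam.le
    rw [hsplit]
    linarith

variable {B : ℕ → ℤ}

lemma exists_sinRatio_le_cfQ_ratio (hhq : h + 3 ≤ q) (hB : IsAdmissible h (Stream'.tail B))
    (n : ℕ) : ∃ (ε : ℤˣ) (j m : ℕ) (r : ℝ), n = m + j ∧ j ≤ h ∧ (∀ i < j, B (m + i + 2) = ε) ∧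
      sinRatio q j ≤ (ε : ℤ) * r ∧ cfQ (lamq q) B (n + 1) = r * cfQ (lamq q) B n := by
  have hzero := sinRatio_zero (show 2 ≤ q by omega)
  induction n with
  | zero =>
    obtain ⟨δ, hδ⟩ : ∃ δ : ℤˣ, 1 ≤ δ * B 1 := by
      obtain hneg | hpos := lt_or_gt_of_ne (show B 1 ≠ 0 from hB.ne_zero 0)
      · exact ⟨-1, by rw [Units.val_neg, Units.val_one]; omega⟩
      · exact ⟨1, by rw [Units.val_one]; omega⟩
    refine ⟨δ, 0, 0, B 1 * lamq q, rfl, h.zero_le, by simp, ?_, by simp [cfQ]⟩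
    rw [hzero, ← mul_assoc]
    exact le_mul_of_one_le_left (hzero ▸ sinRatio_pos (by omega)).le (by exact_mod_cast hδ)
  | succ n ih =>
    obtain ⟨ε, j, m, r, rfl, hjh, hrun, hr, hcf⟩ := ih
    have hr0 : r ≠ 0 := by
      rintro rfl
      exact (sinRatio_pos (by omega)).not_ge (hr.trans_eq (mul_zero _))
    have hcf' : cfQ (lamq q) B (m + j + 2) =
        (B (m + j + 2) * lamq q - 1 / r) * cfQ (lamq q) B (m + j + 1) := by
      rw [cfQ, sub_mul, hcf, one_div, inv_mul_cancel_left₀ hr0]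
    obtain ⟨hb, hr'⟩ | ⟨δ, hδ⟩ :=
      sinRatio_succ_le_or_lamq_le (show j + 3 ≤ q by omega) hr (hB.ne_zero (m + j + 1))
    · have hrun' : ∀ i < j + 1, B (m + i + 2) = ε := fun i hi ↦ by
        obtain hi | rfl := Nat.lt_succ_iff_lt_or_eq.mp hi
        exacts [hrun i hi, hb]
      refine ⟨ε, j + 1, m, _, rfl, ?_, hrun', hr', hcf'⟩
      obtain ⟨i, hi, hne⟩ := hB.exists_apply_ne ε (m + 1)
      by_contra! hlt
      exact hne (by simpa [add_right_comm] using hrun' i (by omega))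
    · exact ⟨δ, 0, m + j + 1, _, rfl, h.zero_le, by simp, hzero.trans_le hδ, hcf'⟩

lemma cfQ_ne_zero (hhq : h + 3 ≤ q) (hB : IsAdmissible h (Stream'.tail B)) (n : ℕ) :
    cfQ (lamq q) B n ≠ 0 := by
  induction n with
  | zero => exact one_ne_zero
  | succ n ih =>
    obtain ⟨ε, j, m, r, -, hjh, -, hr, hcf⟩ := exists_sinRatio_le_cfQ_ratio hhq hB n
    rw [hcf]
    refine mul_ne_zero ?_ ih
    rintro rfl
    exact (sinRatio_pos (by omega)).not_ge (hr.trans_eq (mul_zero _))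

end Denominators

section Regular

open scoped Stream'

lemma hQ_add_three_le {q : ℕ} (hq : 3 ≤ q) : hQ q + 3 ≤ q := by
  unfold hQ
  split_ifs with heven
  · obtain ⟨m, rfl⟩ := heven
    omega
  · omega

lemma le_two_mul_hQ_add_three (q : ℕ) : q ≤ 2 * hQ q + 3 := by
  unfold hQ
  split_ifs with heven
  · omega
  · rw [Nat.not_even_iff] at heven
    omega

lemma RegularSeq.not_isForbidden {q l : ℕ} {a u : Stream' ℤ} (ha : RegularSeq q a) {L : List ℤ}
    (hL : a.drop l = L ++ₛ u) : ¬ IsForbidden q L := by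
  have hofFn : (List.ofFn fun j : Fin L.length ↦ a.get (l + j)) = L :=
    List.ext_getElem (by simp) fun j _ hj ↦ by
      rw [List.getElem_ofFn, ← Stream'.get_append_left j L u hj, ← hL, Stream'.get_drop]
  exact hofFn ▸ ha l L.length

lemma isForbidden_exceptionalBlock_or_append_self (q : ℕ) (ε : ℤˣ) :
    IsForbidden q (exceptionalBlock (hQ q) ε) ∨
      IsForbidden q (exceptionalBlock (hQ q) ε ++ exceptionalBlock (hQ q) ε) := by
  have hε := Int.isUnit_iff.mp ε.isUnit
  by_cases hq : Even q
  · exact .inl ⟨ε, hε, .inr (by rw [if_pos hq]; exact ⟨2, one_le_two, by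
      rw [exceptionalBlock, mul_comm]⟩)⟩
  · exact .inr ⟨ε, hε, .inr (by rw [if_neg hq]; exact ⟨2, one_le_two, by
      simp [exceptionalBlock, mul_comm]⟩)⟩

lemma RegularSeq.isAdmissible {q : ℕ} {a : Stream' ℤ} (ha : RegularSeq q a)
    (h0 : ∀ i, a.get i ≠ 0) : IsAdmissible (hQ q) a where
  ne_zero := h0
  exists_ne ε l := by
    by_contra! hrun
    have htake : (a.drop l).take (hQ q + 1) = List.replicate (hQ q + 1) (ε : ℤ) :=
      List.ext_getElem (by simp) fun j hj _ ↦ by simpa using hrun j (by simpa using hj)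
    have hdrop := Stream'.append_take_drop (hQ q + 1) (a.drop l)
    rw [htake] at hdrop
    exact ha.not_isForbidden hdrop.symm ⟨ε, Int.isUnit_iff.mp ε.isUnit, .inl rfl⟩
  drop_ne ε l hl := by
    have hblock := hl.trans (exceptionalStream_eq (hQ q) ε)
    obtain hforb | hforb := isForbidden_exceptionalBlock_or_append_self q ε
    · exact ha.not_isForbidden hblock hforb
    · rw [exceptionalStream_eq, ← Stream'.append_append_stream] at hblock
      exact ha.not_isForbidden hblock hforb

end Regular

theorem stmt7_general {q h : ℕ} (hhq : h + 3 ≤ q) (hqh : q ≤ 2 * h + 3) {x : ℝ} {A : ℕ → ℤ}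
    (hA : IsAdmissible h (Stream'.tail A)) (hconv : CFConvergesTo (lamq q) A x)
    {g : Matrix.SpecialLinearGroup (Fin 2) ℝ} (hg : g ∈ Hecke q)
    (hden : g.val 1 0 * x + g.val 1 1 ≠ 0) :
    ∃ B : ℕ → ℤ, IsAdmissible h (Stream'.tail B) ∧ CFConvergesTo (lamq q) B (moeb g x) ∧
      CommonTail (fun i ↦ B (i + 1)) (fun i ↦ A (i + 1)) := by
  obtain ⟨k, rfl⟩ := Nat.exists_eq_add_of_le' hhq
  obtain ⟨b, s, hs, hrel⟩ := exists_admissible_tailRel_of_mem_closure mobius_matS_mul_self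
    (by rw [add_comm h k, add_assoc]; exact mobius_matT_mul_matS_pow (by omega))
    (show k ≤ h by omega) hA (mobius_mem_closure hg)
  refine ⟨Stream'.cons b s, hs, hconv.of_tailRel (cfQ_ne_zero hhq hs) hden hrel, ?_⟩
  obtain ⟨m, n, H⟩ := hrel
  exact ⟨m, n, fun k ↦ (H (k + 1)).1⟩

/-- If `x` has an infinite regular `λ_q`-CF and `g ∈ G_q` with `c·x + d ≠ 0`, then `g·x`
has an infinite `λ_q`-CF whose digits `(b_i)_{i≥1}` contain no block of `h_q + 1`
consecutive `1`'s nor of `h_q + 1` consecutive `-1`'s, and whose tail coincides with the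
tail of the expansion of `x`. -/
theorem stmt7 (q : ℕ) (hq : 3 ≤ q) (x : ℝ) (A : ℕ → ℤ) (hA : HasRegCF q x A)
    (g : Matrix.SpecialLinearGroup (Fin 2) ℝ) (hg : g ∈ Hecke q)
    (hden : g.val 1 0 * x + g.val 1 1 ≠ 0) :
    ∃ B : ℕ → ℤ, (∀ i, B (i + 1) ≠ 0) ∧
      CFConvergesTo (lamq q) B (moeb g x) ∧
      (∀ l : ℕ, ∃ k < hQ q + 1, B (l + 1 + k) ≠ 1) ∧
      (∀ l : ℕ, ∃ k < hQ q + 1, B (l + 1 + k) ≠ -1) ∧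
      CommonTail (fun i => B (i + 1)) (fun i => A (i + 1)) := by
  obtain ⟨hA0, hreg, hconv⟩ := hA
  obtain ⟨B, hB, hBconv, htail⟩ := stmt7_general (hQ_add_three_le hq) (le_two_mul_hQ_add_three q)
    (hreg.isAdmissible hA0) hconv hg hden
  exact ⟨B, hB.ne_zero, hBconv, hB.exists_apply_ne 1, hB.exists_apply_ne (-1), htail⟩
end

section
/- Let q ≥ 3 be odd. The infinite λ_q-continued fraction [1; 3, 3, 3, …] for q = 3, respectively [1; (1)^{h_q}, 2, (1)^{h_q−1}, 2, (1)^{h_q}, 2, (1)^{h_q−1}, 2, …] for odd q ≥ 5 (a_0 = 1 followed by the periodic repetition of the block ((1)^{h_q}, 2, (1)^{h_q−1}, 2)), is regular and converges to a value R_q which satisfies R_q² + (2 − λ_q)·R_q = 1 and λ_q/2 < R_q ≤ 1. -/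
open Filter Topology

/-! The remainders `p_{n-1} - R q_{n-1}` satisfy the recurrence of the convergents. If they are
positive and bounded, then the determinant identity forces `q_n / (p_n - R q_n)` to grow at least
linearly, so `p_n / q_n` converges to `R`.

Along a run of digits `1` the recurrence is solved by sines of multiples of `π / q`. Up to the
digit `2` in the middle of the period the remainders are such a solution with parameter `R`, and
after it they follow the solution with parameter `-R` backwards. The quadratic equation for `R` is
exactly the condition for the two to match, so over one period the remainders stay positive and are
multiplied by a constant in `(0, 1]`. For `q = 3` the two digits `2` of the period merge into `3`.

For regularity, any `h_q + 1` consecutive digits contain one that is at least `2`, and a full period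
of digits has sum `q`, whereas `(1)^{h_q}, 2, (1)^{h_q}` has sum `q - 1`. -/

theorem forall_of_forall_lt_of_add {p : ℕ → Prop} {N : ℕ} (hN : 0 < N) (hlt : ∀ n < N, p n)
    (hadd : ∀ n, p n → p (n + N)) (n : ℕ) : p n := by
  induction n using Nat.strong_induction_on with
  | _ n ih =>
    rcases lt_or_ge n N with hn | hn
    · exact hlt n hn
    · simpa only [Nat.sub_add_cancel hn] using hadd (n - N) (ih (n - N) (by lia))

/-- The remainders `p_{n-1} - x q_{n-1}` of the convergents against `x`. The index is shifted by one
so that the convention `p_{-1} = 1`, `q_{-1} = 0` gives the value at `0`. -/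
noncomputable def cfRemainder (lam : ℝ) (A : ℕ → ℤ) (x : ℝ) : ℕ → ℝ
  | 0 => 1
  | n + 1 => cfP lam A n - x * cfQ lam A n

section Remainder

variable {lam x : ℝ} {A : ℕ → ℤ}

theorem cfRemainder_zero : cfRemainder lam A x 0 = 1 := rfl

theorem cfRemainder_one : cfRemainder lam A x 1 = A 0 * lam - x := by
  simp only [cfRemainder, cfP, cfQ, mul_one]

theorem cfRemainder_add_two (n : ℕ) :
    cfRemainder lam A x (n + 2) =
      A (n + 1) * lam * cfRemainder lam A x (n + 1) - cfRemainder lam A x n := by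
  cases n <;> simp only [cfRemainder, cfP, cfQ] <;> ring

theorem cfRemainder_mul_cfQ_succ_sub (n : ℕ) :
    cfRemainder lam A x (n + 1) * cfQ lam A (n + 1) - cfRemainder lam A x (n + 2) * cfQ lam A n =
      1 := by
  induction n with
  | zero => simp only [cfRemainder, cfP, cfQ]; ring
  | succ n ih =>
    rw [cfRemainder_add_two (n + 1)]
    simp only [cfQ]
    linear_combination ih

theorem natCast_mul_inv_sq_lt_cfQ_div_cfRemainder {B : ℝ} (hpos : ∀ n, 0 < cfRemainder lam A x n)
    (hB : ∀ n, cfRemainder lam A x n ≤ B) (n : ℕ) :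
    n * (B ^ 2)⁻¹ < cfQ lam A n / cfRemainder lam A x (n + 1) := by
  induction n with
  | zero => simpa [cfQ] using hpos 1
  | succ n ih =>
    have hstep : cfQ lam A (n + 1) / cfRemainder lam A x (n + 2) =
        cfQ lam A n / cfRemainder lam A x (n + 1) +
          (cfRemainder lam A x (n + 1) * cfRemainder lam A x (n + 2))⁻¹ := by
      have h₁ := (hpos (n + 1)).ne'
      have h₂ := (hpos (n + 2)).ne'
      field_simp
      linear_combination cfRemainder_mul_cfQ_succ_sub (lam := lam) (x := x) (A := A) n
    have hprod : (B ^ 2)⁻¹ ≤ (cfRemainder lam A x (n + 1) * cfRemainder lam A x (n + 2))⁻¹ := by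
      rw [sq]
      exact inv_anti₀ (mul_pos (hpos _) (hpos _))
        (mul_le_mul (hB _) (hB _) (hpos _).le ((hpos 0).le.trans (hB 0)))
    rw [hstep]
    push_cast
    linarith

theorem cfConvergesTo_of_cfRemainder_pos_of_le {B : ℝ} (hpos : ∀ n, 0 < cfRemainder lam A x n)
    (hB : ∀ n, cfRemainder lam A x n ≤ B) : CFConvergesTo lam A x := by
  have hBpos : 0 < B := (hpos 0).trans_le (hB 0)
  have hgrow := natCast_mul_inv_sq_lt_cfQ_div_cfRemainder hpos hB
  have hQ (n : ℕ) : 0 < cfQ lam A n :=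
    (div_pos_iff_of_pos_right (hpos (n + 1))).1
      ((by positivity : (0 : ℝ) ≤ n * (B ^ 2)⁻¹).trans_lt (hgrow n))
  have htop : Tendsto (fun n => cfQ lam A n / cfRemainder lam A x (n + 1)) atTop atTop :=
    tendsto_atTop_mono (fun n => (hgrow n).le)
      (tendsto_natCast_atTop_atTop.atTop_mul_const (by positivity))
  refine ⟨fun n => (hQ n).ne', ?_⟩
  have hlim := htop.inv_tendsto_atTop.const_add x
  rw [add_zero] at hlim
  refine hlim.congr fun n => ?_
  have hn := (hQ n).ne'
  rw [Pi.inv_apply, inv_div, cfRemainder]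
  field_simp
  ring

theorem cfRemainder_add_period {N : ℕ} (hA : Function.Periodic (fun n => A (n + 1)) N)
    (hmul : cfRemainder lam A x (N + 1) = cfRemainder lam A x N * cfRemainder lam A x 1) (n : ℕ) :
    cfRemainder lam A x (n + N) = cfRemainder lam A x N * cfRemainder lam A x n := by
  induction n using Nat.twoStepInduction with
  | zero => rw [zero_add, cfRemainder_zero, mul_one]
  | one => rw [add_comm, hmul]
  | more n ih₀ ih₁ =>
    have hdigit : A (n + N + 1) = A (n + 1) := hA n
    rw [cfRemainder_add_two, add_right_comm n 2 N, cfRemainder_add_two, add_right_comm n N 1, ih₁,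
      ih₀, ← hdigit, add_right_comm n N 1]
    ring

theorem cfConvergesTo_of_periodic {N : ℕ} (hN : 0 < N)
    (hA : Function.Periodic (fun n => A (n + 1)) N) (hpos : ∀ n ≤ N, 0 < cfRemainder lam A x n)
    (hle : cfRemainder lam A x N ≤ 1)
    (hmul : cfRemainder lam A x (N + 1) = cfRemainder lam A x N * cfRemainder lam A x 1) :
    CFConvergesTo lam A x := by
  have hbound : ∀ n, 0 < cfRemainder lam A x n ∧
      cfRemainder lam A x n ≤ ∑ i ∈ Finset.range N, cfRemainder lam A x i := by
    refine forall_of_forall_lt_of_add hN (fun n hn => ⟨hpos n hn.le, ?_⟩) fun n ⟨h₀, h₁⟩ => ?_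
    · exact Finset.single_le_sum (f := cfRemainder lam A x)
        (fun i hi => (hpos i (Finset.mem_range.1 hi).le).le) (Finset.mem_range.2 hn)
    · rw [cfRemainder_add_period hA hmul]
      exact ⟨mul_pos (hpos N le_rfl) h₀, (mul_le_of_le_one_left h₀.le hle).trans h₁⟩
  exact cfConvergesTo_of_cfRemainder_pos_of_le (fun n => (hbound n).1) fun n => (hbound n).2

end Remainder

theorem sin_add_one_mul (θ t : ℝ) :
    Real.sin ((t + 1) * θ) = 2 * Real.cos θ * Real.sin (t * θ) - Real.sin ((t - 1) * θ) := by
  rw [add_mul, sub_mul, one_mul, Real.sin_add, Real.sin_sub]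
  ring

/-- The solution `w` of `w (t + 1) + w (t - 1) = 2 cos θ · w t` whose consecutive ratios
`w (t + 1) / w t` are the iterates of `1 / x` under `y ↦ 2 cos θ - 1 / y`. -/
noncomputable def sinSol (θ x t : ℝ) : ℝ := Real.sin ((t + 1) * θ) - x * Real.sin (t * θ)

theorem sinSol_add_one (θ x t : ℝ) :
    sinSol θ x (t + 1) = 2 * Real.cos θ * sinSol θ x t - sinSol θ x (t - 1) := by
  simp only [sinSol]
  rw [sin_add_one_mul θ (t + 1), sin_add_one_mul θ t, add_sub_cancel_right, sub_add_cancel]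
  ring

theorem sinSol_zero (θ x : ℝ) : sinSol θ x 0 = Real.sin θ := by simp [sinSol]

theorem sinSol_neg_one (θ x : ℝ) : sinSol θ x (-1) = x * Real.sin θ := by simp [sinSol]

theorem sinSol_pos {θ x t : ℝ} (hθ : 0 < θ) (hx : x ≤ 1) (ht : 0 ≤ t)
    (htθ : (t + 1) * θ ≤ Real.pi / 2) : 0 < sinSol θ x t := by
  have htθ₀ : 0 ≤ t * θ := by positivity
  have hlt : t * θ < (t + 1) * θ := by linarith
  have hsin₀ : 0 ≤ Real.sin (t * θ) :=
    Real.sin_nonneg_of_nonneg_of_le_pi htθ₀ (by linarith [Real.pi_pos])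
  have hsin : Real.sin (t * θ) < Real.sin ((t + 1) * θ) :=
    Real.sin_lt_sin_of_lt_of_le_pi_div_two (by linarith [Real.pi_pos]) htθ hlt
  exact sub_pos.2 ((mul_le_of_le_one_left hsin₀ hx).trans_lt hsin)

section HalfPeriod

variable {θ h R : ℝ}

theorem sin_half_period_add_one (hθ : (2 * h + 3) * θ = Real.pi) :
    Real.sin ((h + 1 + 1) * θ) = Real.sin ((h + 1) * θ) := by
  rw [← Real.sin_pi_sub, ← hθ]
  ring_nf

theorem sinSol_half_period (hθ : (2 * h + 3) * θ = Real.pi) (x : ℝ) :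
    sinSol θ x (h + 1) = (1 - x) * Real.sin ((h + 1) * θ) := by
  rw [sinSol, sin_half_period_add_one hθ]
  ring

theorem sinSol_half_period_sub_one (hθ : (2 * h + 3) * θ = Real.pi) (x : ℝ) :
    sinSol θ x h = (1 + x - 2 * Real.cos θ * x) * Real.sin ((h + 1) * θ) := by
  have hrec := sin_add_one_mul θ (h + 1)
  rw [sin_half_period_add_one hθ, add_sub_cancel_right] at hrec
  rw [sinSol]
  linear_combination -x * hrec

/-- The factor by which the remainders of the continued fraction of `R_q` are multiplied over one
period of the digits, for `θ = π / q`. -/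
noncomputable def periodMultiplier (θ R : ℝ) : ℝ := (1 + R - 2 * Real.cos θ) / (1 + R)

theorem periodMultiplier_mul_one_add (hR₀ : 1 + R ≠ 0) :
    periodMultiplier θ R * (1 + R) = 1 + R - 2 * Real.cos θ :=
  div_mul_cancel₀ _ hR₀

theorem sinSol_half_period_eq (hθ : (2 * h + 3) * θ = Real.pi)
    (hR : R ^ 2 + (2 - 2 * Real.cos θ) * R = 1) (hR₀ : 1 + R ≠ 0) :
    sinSol θ R (h + 1) = periodMultiplier θ R * sinSol θ (-R) h := by
  have hμ := periodMultiplier_mul_one_add (θ := θ) hR₀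
  apply mul_left_cancel₀ hR₀
  rw [sinSol_half_period hθ, sinSol_half_period_sub_one hθ]
  linear_combination Real.sin ((h + 1) * θ) *
    (-(2 * Real.cos θ * hR) - (1 - R + 2 * Real.cos θ * R) * hμ)

theorem sinSol_half_period_kink (hθ : (2 * h + 3) * θ = Real.pi)
    (hR : R ^ 2 + (2 - 2 * Real.cos θ) * R = 1) (hR₀ : 1 + R ≠ 0) :
    2 * (2 * Real.cos θ) * sinSol θ R (h + 1) - sinSol θ R h =
      periodMultiplier θ R * sinSol θ (-R) (h - 1) := by
  have hμ := periodMultiplier_mul_one_add (θ := θ) hR₀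
  have hrec := sinSol_add_one θ (-R) h
  rw [sinSol_half_period hθ] at hrec
  linear_combination 2 * Real.cos θ * sinSol_half_period_eq hθ hR hR₀ -
    periodMultiplier θ R * hrec + 2 * Real.cos θ * sinSol_half_period hθ R -
    sinSol_half_period_sub_one hθ R + Real.sin ((h + 1) * θ) * hμ

end HalfPeriod

theorem hQ_two_mul_add_three (h : ℕ) : hQ (2 * h + 3) = h := by
  have hodd : ¬Even (2 * h + 3) := by grind
  rw [hQ, if_neg hodd]
  lia

theorem rho_two_mul_add_three (h n : ℕ) :
    rho (2 * h + 3) n = 1 + (if n % (2 * h + 1) = h then 1 else 0) +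
      if n % (2 * h + 1) = 2 * h then 1 else 0 := by
  have hodd : ¬Even (2 * h + 3) := by grind
  rcases h with _ | h
  · simp [rho, rhoBlock, Nat.mod_one]
  · have hlength : (rhoBlock (2 * (h + 1) + 3)).length = 2 * (h + 1) + 1 := by
      rw [rhoBlock, if_neg (by lia), if_neg hodd, hQ_two_mul_add_three]
      simp only [List.length_append, List.length_replicate, List.length_cons, List.length_nil]
      lia
    have hlt : n % (2 * (h + 1) + 1) < 2 * (h + 1) + 1 := Nat.mod_lt _ (by lia)
    rw [rho, hlength]
    generalize n % (2 * (h + 1) + 1) = r at hlt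
    rw [rhoBlock, if_neg (by lia), if_neg hodd, hQ_two_mul_add_three, List.getD_eq_getElem?_getD]
    grind

theorem rho_of_le {h n : ℕ} (hn : n ≤ 2 * h) :
    rho (2 * h + 3) n = 1 + (if n = h then 1 else 0) + if n = 2 * h then 1 else 0 := by
  rw [rho_two_mul_add_three, Nat.mod_eq_of_lt (by lia)]

theorem one_le_rho (h n : ℕ) : 1 ≤ rho (2 * h + 3) n := by
  rw [rho_two_mul_add_three]
  split_ifs <;> norm_num

theorem rho_periodic (h : ℕ) : Function.Periodic (rho (2 * h + 3)) (2 * h + 1) := fun n => by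
  simp only [rho_two_mul_add_three, Nat.add_mod_right]

theorem exists_two_le_rho (h l : ℕ) : ∃ k ≤ h, 2 ≤ rho (2 * h + 3) (l + k) := by
  have hlt : l % (2 * h + 1) < 2 * h + 1 := Nat.mod_lt _ (by lia)
  have hmod (k : ℕ) (hk : l % (2 * h + 1) + k < 2 * h + 1) :
      (l + k) % (2 * h + 1) = l % (2 * h + 1) + k := by
    rw [← Nat.mod_add_mod, Nat.mod_eq_of_lt hk]
  rcases le_or_gt (l % (2 * h + 1)) h with hl | hl
  · refine ⟨h - l % (2 * h + 1), by lia, ?_⟩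
    rw [rho_two_mul_add_three, hmod _ (by lia), if_pos (by lia)]
    split_ifs <;> norm_num
  · refine ⟨2 * h - l % (2 * h + 1), by lia, ?_⟩
    rw [rho_two_mul_add_three, hmod _ (by lia), if_neg (by lia), if_pos (by lia)]
    norm_num

theorem sum_range_add_of_periodic {M : Type*} [AddCancelCommMonoid M] {f : ℕ → M} {N : ℕ}
    (hf : Function.Periodic f N) (l : ℕ) :
    ∑ k ∈ Finset.range N, f (l + k) = ∑ k ∈ Finset.range N, f k := by
  induction l with
  | zero => simp only [zero_add]
  | succ l ih =>
    apply add_right_cancel (b := f l)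
    rw [← ih, ← hf l, ← Finset.sum_range_succ, Finset.sum_range_succ', add_zero, hf]
    simp only [add_assoc, add_comm 1]

theorem sum_range_rho (h l : ℕ) :
    ∑ k ∈ Finset.range (2 * h + 1), rho (2 * h + 3) (l + k) = 2 * h + 3 := by
  rw [sum_range_add_of_periodic (rho_periodic h)]
  rw [Finset.sum_congr rfl fun k hk => rho_of_le (by grind : k ≤ 2 * h)]
  have hmem : h ∈ Finset.range (2 * h + 1) := by grind
  have hmem' : 2 * h ∈ Finset.range (2 * h + 1) := by grind
  simp only [Finset.sum_add_distrib, Finset.sum_ite_eq', hmem, hmem', if_true, Finset.sum_const,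
    Finset.card_range, nsmul_eq_mul, mul_one]
  push_cast
  ring

theorem isForbidden_two_mul_add_three_iff (h : ℕ) (L : List ℤ) :
    IsForbidden (2 * h + 3) L ↔ ∃ ε : ℤ, (ε = 1 ∨ ε = -1) ∧ (L = List.replicate (h + 1) ε ∨
      ∃ m : ℤ, 1 ≤ m ∧ L =
        List.replicate h ε ++ ε * 2 :: (List.replicate h ε ++ [ε * m])) := by
  have hodd : ¬Even (2 * h + 3) := by grind
  simp only [IsForbidden, hQ_two_mul_add_three, if_neg hodd]

theorem regularSeq_rho (h : ℕ) : RegularSeq (2 * h + 3) (rho (2 * h + 3)) := by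
  intro l len hforb
  obtain ⟨ε, hε, hblock | ⟨m, -, hblock⟩⟩ :=
      (isForbidden_two_mul_add_three_iff h _).1 hforb
  · obtain ⟨k, hk, hrho⟩ := exists_two_le_rho h l
    obtain ⟨hlen, hconst⟩ := List.eq_replicate_iff.1 hblock
    rw [List.length_ofFn] at hlen
    have hdigit : rho (2 * h + 3) (l + k) = ε :=
      hconst _ (List.mem_ofFn.2 ⟨⟨k, by lia⟩, rfl⟩)
    lia
  · obtain rfl : len = 2 * h + 1 + 1 := by
      have hlen := congrArg List.length hblock
      simp only [List.length_ofFn, List.length_append, List.length_replicate, List.length_cons,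
        List.length_nil] at hlen
      lia
    rw [List.ofFn_succ_last, ← List.cons_append, ← List.append_assoc] at hblock
    have hsum := congrArg List.sum (List.append_inj_left' hblock rfl)
    simp only [List.sum_ofFn, List.sum_append, List.sum_cons, List.sum_replicate,
      Fin.val_castSucc] at hsum
    rw [← Finset.sum_range (fun k => rho (2 * h + 3) (l + k)), sum_range_rho] at hsum
    simp only [nsmul_eq_mul] at hsum
    rcases hε with rfl | rfl <;> lia

section PeriodRemainder

variable {θ R : ℝ} {h : ℕ} {A : ℕ → ℤ}

theorem sin_mul_cfRemainder_of_le (hA₀ : A 0 = 1) (hA : ∀ n < h, A (n + 1) = 1) (n : ℕ)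
    (hn : n ≤ h + 1) :
    Real.sin θ * cfRemainder (2 * Real.cos θ) A R n = sinSol θ R n := by
  induction n using Nat.twoStepInduction with
  | zero => rw [cfRemainder_zero, Nat.cast_zero, sinSol_zero, mul_one]
  | one =>
    have hrec := sinSol_add_one θ R 0
    rw [zero_add, zero_sub, sinSol_zero, sinSol_neg_one] at hrec
    rw [cfRemainder_one, hA₀, Nat.cast_one, hrec]
    push_cast
    ring
  | more n ih₀ ih₁ =>
    have hrec := sinSol_add_one θ R (n + 1)
    rw [add_sub_cancel_right] at hrec
    have h₀ := ih₀ (by lia)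
    have h₁ := ih₁ (by lia)
    push_cast at h₁ ⊢
    rw [cfRemainder_add_two, hA n (by lia), show (n : ℝ) + 2 = n + 1 + 1 by ring, hrec, ← h₀,
      ← h₁]
    push_cast
    ring

theorem digit_eq_one_of_lt
    (hA : ∀ n ≤ 2 * h, A (n + 1) = 1 + (if n = h then 1 else 0) + if n = 2 * h then 1 else 0)
    (n : ℕ) (hn : n < h) : A (n + 1) = 1 := by
  rw [hA n (by lia), if_neg (by lia), if_neg (by lia), add_zero, add_zero]

/-- The last digit of the period exceeds by one the digit that would continue the recurrence of
`sinSol`; subtracting the excess when `j = h` makes the induction uniform, also for `h = 0`. -/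
theorem sin_mul_cfRemainder_of_ge (hθ : (2 * h + 3) * θ = Real.pi)
    (hR : R ^ 2 + (2 - 2 * Real.cos θ) * R = 1) (hR₀ : 1 + R ≠ 0) (hA₀ : A 0 = 1)
    (hA : ∀ n ≤ 2 * h, A (n + 1) = 1 + (if n = h then 1 else 0) + if n = 2 * h then 1 else 0)
    (j : ℕ) (hj : j ≤ h) :
    Real.sin θ * cfRemainder (2 * Real.cos θ) A R (h + 1 + j) =
        periodMultiplier θ R * sinSol θ (-R) (h - j) ∧
      Real.sin θ * (cfRemainder (2 * Real.cos θ) A R (h + 1 + j + 1) -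
        if j = h then 2 * Real.cos θ * cfRemainder (2 * Real.cos θ) A R (h + 1 + j) else 0) =
        periodMultiplier θ R * sinSol θ (-R) (h - j - 1) := by
  induction j with
  | zero =>
    have hrun := sin_mul_cfRemainder_of_le (θ := θ) (R := R) hA₀ (digit_eq_one_of_lt hA)
    have hmid := hrun h (by lia)
    have hmid' := hrun (h + 1) le_rfl
    push_cast at hmid'
    have heq := sinSol_half_period_eq hθ hR hR₀
    have hkink := sinSol_half_period_kink hθ hR hR₀
    refine ⟨by simpa only [Nat.cast_zero, sub_zero, add_zero, hmid'] using heq, ?_⟩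
    rw [add_zero, cfRemainder_add_two, hA h (by lia), Nat.cast_zero, sub_zero, ← hkink, ← hmid,
      ← hmid']
    split_ifs <;> first | lia | (push_cast; ring)
  | succ j ih =>
    obtain ⟨ih₀, ih₁⟩ := ih (by lia)
    rw [if_neg (by lia), sub_zero] at ih₁
    have hrec := sinSol_add_one θ (-R) (h - j - 1)
    rw [sub_add_cancel] at hrec
    push_cast
    rw [← add_assoc, ← sub_sub]
    refine ⟨ih₁, ?_⟩
    have hnext : periodMultiplier θ R * sinSol θ (-R) (h - j - 1 - 1) =
        2 * Real.cos θ * (periodMultiplier θ R * sinSol θ (-R) (h - j - 1)) -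
          periodMultiplier θ R * sinSol θ (-R) (h - j) := by
      rw [hrec]
      ring
    rw [hnext, ← ih₀, ← ih₁, cfRemainder_add_two, hA (h + 1 + j) (by lia)]
    split_ifs <;> first | lia | (push_cast; ring)

theorem cfRemainder_period (hθ : (2 * h + 3) * θ = Real.pi)
    (hR : R ^ 2 + (2 - 2 * Real.cos θ) * R = 1) (hR₀ : 1 + R ≠ 0) (hsin : Real.sin θ ≠ 0)
    (hA₀ : A 0 = 1)
    (hA : ∀ n ≤ 2 * h, A (n + 1) = 1 + (if n = h then 1 else 0) + if n = 2 * h then 1 else 0) :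
    cfRemainder (2 * Real.cos θ) A R (2 * h + 1) = periodMultiplier θ R := by
  have hend := (sin_mul_cfRemainder_of_ge hθ hR hR₀ hA₀ hA h le_rfl).1
  rw [sub_self, sinSol_zero, show h + 1 + h = 2 * h + 1 by ring] at hend
  exact mul_left_cancel₀ hsin (hend.trans (mul_comm _ _))

theorem cfRemainder_period_add_one (hθ : (2 * h + 3) * θ = Real.pi)
    (hR : R ^ 2 + (2 - 2 * Real.cos θ) * R = 1) (hR₀ : 1 + R ≠ 0) (hsin : Real.sin θ ≠ 0)
    (hA₀ : A 0 = 1)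
    (hA : ∀ n ≤ 2 * h, A (n + 1) = 1 + (if n = h then 1 else 0) + if n = 2 * h then 1 else 0) :
    cfRemainder (2 * Real.cos θ) A R (2 * h + 1 + 1) =
      periodMultiplier θ R * cfRemainder (2 * Real.cos θ) A R 1 := by
  have hend := (sin_mul_cfRemainder_of_ge hθ hR hR₀ hA₀ hA h le_rfl).2
  rw [if_pos rfl, sub_self, zero_sub, sinSol_neg_one, show h + 1 + h = 2 * h + 1 by ring,
    cfRemainder_period hθ hR hR₀ hsin hA₀ hA] at hend
  rw [cfRemainder_one, hA₀]
  apply mul_left_cancel₀ hsin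
  push_cast
  linear_combination hend

theorem cfRemainder_pos_of_le_period (hθ : (2 * h + 3) * θ = Real.pi)
    (hR : R ^ 2 + (2 - 2 * Real.cos θ) * R = 1) (hR_neg : -1 < R) (hR_le : R ≤ 1) (hθ₀ : 0 < θ)
    (hμ : 0 < periodMultiplier θ R) (hA₀ : A 0 = 1)
    (hA : ∀ n ≤ 2 * h, A (n + 1) = 1 + (if n = h then 1 else 0) + if n = 2 * h then 1 else 0)
    (n : ℕ) (hn : n ≤ 2 * h + 1) : 0 < cfRemainder (2 * Real.cos θ) A R n := by
  have hquarter (t : ℝ) (ht : t ≤ h) : (t + 1) * θ ≤ Real.pi / 2 := by nlinarith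
  have hsin : 0 < Real.sin θ := by
    rw [← sinSol_zero θ 0]
    exact sinSol_pos hθ₀ zero_le_one le_rfl (hquarter 0 h.cast_nonneg)
  refine pos_of_mul_pos_right ?_ hsin.le
  rcases le_or_gt n h with hnh | hnh
  · rw [sin_mul_cfRemainder_of_le hA₀ (digit_eq_one_of_lt hA) n (by lia)]
    exact sinSol_pos hθ₀ hR_le n.cast_nonneg (hquarter n (by exact_mod_cast hnh))
  · obtain ⟨j, rfl⟩ := Nat.exists_eq_add_of_lt hnh
    have hj : (j : ℝ) ≤ h := by exact_mod_cast (by lia : j ≤ h)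
    rw [add_right_comm,
      (sin_mul_cfRemainder_of_ge hθ hR (by linarith) hA₀ hA j (by lia)).1]
    exact mul_pos hμ (sinSol_pos hθ₀ (by linarith) (sub_nonneg.2 hj)
      (hquarter _ (sub_le_self _ j.cast_nonneg)))

theorem cfConvergesTo_of_rho (hθ : (2 * h + 3) * θ = Real.pi)
    (hR : R ^ 2 + (2 - 2 * Real.cos θ) * R = 1) (hR_gt : Real.cos θ < R) (hR_le : R ≤ 1)
    (hA₀ : A 0 = 1) (hA : ∀ n, A (n + 1) = rho (2 * h + 3) n) :
    CFConvergesTo (2 * Real.cos θ) A R := by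
  have hθ₀ : 0 < θ := pos_of_mul_pos_right (hθ ▸ Real.pi_pos) (by positivity)
  have hθ_le : θ ≤ Real.pi / 2 := by nlinarith [(h.cast_nonneg : (0 : ℝ) ≤ h)]
  have hcos : 0 ≤ Real.cos θ := Real.cos_nonneg_of_neg_pi_div_two_le_of_le (by linarith) hθ_le
  have hsin : 0 < Real.sin θ := Real.sin_pos_of_pos_of_lt_pi hθ₀ (by linarith)
  have hR₀ : 0 < 1 + R := by linarith
  have hμ : 0 < periodMultiplier θ R := div_pos (by linarith [Real.cos_le_one θ]) hR₀
  have hμ_le : periodMultiplier θ R ≤ 1 := (div_le_one hR₀).2 (by linarith)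
  have hdigits : ∀ n ≤ 2 * h,
      A (n + 1) = 1 + (if n = h then 1 else 0) + if n = 2 * h then 1 else 0 :=
    fun n hn => (hA n).trans (rho_of_le hn)
  have hperiod := cfRemainder_period hθ hR hR₀.ne' hsin.ne' hA₀ hdigits
  refine cfConvergesTo_of_periodic (N := 2 * h + 1) (by lia) ?_
    (cfRemainder_pos_of_le_period hθ hR (by linarith) hR_le hθ₀ hμ hA₀ hdigits) ?_ ?_
  · simpa only [hA] using rho_periodic h
  · rwa [hperiod]
  · rw [hperiod, cfRemainder_period_add_one hθ hR hR₀.ne' hsin.ne' hA₀ hdigits]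

end PeriodRemainder

theorem lamq_lt_two {q : ℕ} (hq : 0 < q) : lamq q < 2 := by
  have hq' : (1 : ℝ) ≤ q := by exact_mod_cast hq
  have hcos : Real.cos (Real.pi / q) < Real.cos 0 :=
    Real.cos_lt_cos_of_nonneg_of_le_pi le_rfl (div_le_self Real.pi_pos.le hq') (by positivity)
  rw [Real.cos_zero] at hcos
  rw [lamq]
  linarith

theorem Rq_sq_add {q : ℕ} (hq : Odd q) : Rq q ^ 2 + (2 - lamq q) * Rq q = 1 := by
  have hsqrt : √((2 - lamq q) ^ 2 + 4) ^ 2 = (2 - lamq q) ^ 2 + 4 := Real.sq_sqrt (by positivity)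
  rw [Rq, if_neg (Nat.not_even_iff_odd.2 hq)]
  linear_combination hsqrt / 4

theorem Rq_pos {q : ℕ} (hq : Odd q) : 0 < Rq q := by
  have hsqrt : 2 - lamq q < √((2 - lamq q) ^ 2 + 4) := Real.lt_sqrt_of_sq_lt (by linarith)
  rw [Rq, if_neg (Nat.not_even_iff_odd.2 hq)]
  linarith

theorem lamq_div_two_lt_Rq {q : ℕ} (hq : Odd q) : lamq q / 2 < Rq q := by
  have hlam := lamq_lt_two hq.pos
  by_contra! hle
  nlinarith [Rq_sq_add hq, Rq_pos hq, sq_pos_of_pos (sub_pos.2 hlam)]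

theorem Rq_le_one {q : ℕ} (hq : Odd q) : Rq q ≤ 1 := by
  by_contra! hlt
  nlinarith [Rq_sq_add hq, lamq_lt_two hq.pos]

theorem cfConvergesTo_Rq {h : ℕ} {A : ℕ → ℤ} (hA₀ : A 0 = 1)
    (hA : ∀ n, A (n + 1) = rho (2 * h + 3) n) :
    CFConvergesTo (lamq (2 * h + 3)) A (Rq (2 * h + 3)) := by
  have hodd : Odd (2 * h + 3) := by grind
  refine cfConvergesTo_of_rho ?_ (Rq_sq_add hodd) ?_ (Rq_le_one hodd) hA₀ hA
  · push_cast
    field_simp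
  · simpa only [lamq, mul_div_cancel_left₀ _ (two_ne_zero' ℝ)] using lamq_div_two_lt_Rq hodd

/-- For odd `q ≥ 3` the infinite `λ_q`-CF `[1; ov(3)]` (for `q = 3`), respectively
`[1; ov((1)^{h_q}, 2, (1)^{h_q-1}, 2)]` (for odd `q ≥ 5`), is regular and converges to a
value `R_q` with `R_q² + (2 - λ_q)·R_q = 1` and `λ_q/2 < R_q ≤ 1`. -/
theorem stmt10 (q : ℕ) (hq : 3 ≤ q) (hqo : Odd q) (A : ℕ → ℤ)
    (hA : A = fun n => if n = 0 then 1 else rho q (n - 1)) :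
    (∀ i, A (i + 1) ≠ 0) ∧ RegularSeq q (fun i => A (i + 1)) ∧
      ∃ R : ℝ, CFConvergesTo (lamq q) A R ∧
        R ^ 2 + (2 - lamq q) * R = 1 ∧ lamq q / 2 < R ∧ R ≤ 1 := by
  obtain ⟨h, rfl⟩ : ∃ h, q = 2 * h + 3 := by
    obtain ⟨k, rfl⟩ := hqo
    exact ⟨k - 1, by lia⟩
  have hA₀ : A 0 = 1 := congrFun hA 0
  have hA' (n : ℕ) : A (n + 1) = rho (2 * h + 3) n := congrFun hA (n + 1)
  have hne (n : ℕ) : rho (2 * h + 3) n ≠ 0 := (one_pos.trans_le (one_le_rho h n)).ne'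
  simp only [hA']
  exact ⟨hne, regularSeq_rho h, Rq (2 * h + 3), cfConvergesTo_Rq hA₀ hA', Rq_sq_add hqo,
    lamq_div_two_lt_Rq hqo, Rq_le_one hqo⟩
end
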